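/- Periodic minimum problem, intermediate-size domains, small volume fraction: let τ ∈ [0,1], write τ_* = min{τ,1−τ} and τ^* = max{τ,1−τ}, and assume τ_* ≤ L ≤ τ^* and 0 < σ < (L+τ_*)²/(4L). Then 4√(σL) is the least element of the set of values E^{#}_τ(v) as v ranges over Adm(L,σ): every v ∈ Adm(L,σ) satisfies E^{#}_τ(v) ≥ 4√(σL), and the function v = √(σL)·χ_{(s, s+√(σL))} attains this value for any 0 ≤ s ≤ L − √(σL). -/

import Mathlib

open MeasureTheory Filter Set

noncomputable section

/-- `Adm L σ v` : `v` is admissible, i.e. `0 ≤ v ≤ 1` on `(0,L)`, `v` has finite pointwise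
total variation on `(0,L)` and `∫_{(0,L)} v = σL`. -/
def Adm (L σ : ℝ) (v : ℝ → ℝ) : Prop :=
  (∀ x ∈ Set.Ioo 0 L, 0 ≤ v x ∧ v x ≤ 1) ∧
  BoundedVariationOn v (Set.Ioo 0 L) ∧
  (∫ x in Set.Ioo 0 L, v x) = σ * L

/-- The interior part of the limit functional:
`2·λ({x ∈ (0,L) : 0 < v(x) < 1}) + Var(v;(0,L))`. -/
def Fvol (L : ℝ) (v : ℝ → ℝ) : ℝ :=
  2 * (volume {x ∈ Set.Ioo 0 L | 0 < v x ∧ v x < 1}).toReal +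
    (eVariationOn v (Set.Ioo 0 L)).toReal

/-- The boundary term `φ_τ(x,y) = λ( [0,1] ∩ ( ([−τ,x−τ] ∪ [1−τ,x+1−τ]) Δ [0,y] ) )`. -/
def phi (τ x y : ℝ) : ℝ :=
  (volume (Set.Icc (0 : ℝ) 1 ∩
    symmDiff (Set.Icc (-τ) (x - τ) ∪ Set.Icc (1 - τ) (x + 1 - τ)) (Set.Icc 0 y))).toReal

/-!
Let `m` be the measure of the set where `0 < v < 1` and `P = Var(v) + φ_τ(v(0⁺), v(L⁻))`, so that
the energy is `2m + P`. Since `φ_τ(a, b) ≥ |a - b|`, `P` dominates the variation of `v` around a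
loop, hence `v` oscillates by at most `P / 2`. If `v` vanishes somewhere but never equals `1`, it is
therefore at most `P / 2` on the transition set and `0` elsewhere, so `σL ≤ m · P / 2` and the AM-GM
inequality gives `4√(σL) ≤ 2m + P`. If `v` equals `1` somewhere but never vanishes, the same
argument applies to `1 - v`, whose integral is at least `σL` because `σ ≤ 1/2`. If both values
occur, then `P ≥ 2`. If neither does, then `m = L`, and either `P / 2 ≥ min τ (1 - τ)` or one of the
bounds `v ≤ P / 2`, `1 - v ≤ P / 2` holds everywhere: `φ_τ(a, b)` is `a + b` minus twice the overlap
of two arcs, and that overlap is at most `(a - τ)⁺ + (b - (1 - τ))⁺`.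
-/

open scoped Topology symmDiff

section Variation

variable {α E : Type*} [LinearOrder α] [TopologicalSpace α] [PseudoEMetricSpace E]
  {f : α → E} {s : Set α} {l u x y : α} {a b : E}

theorem edist_le_eVariationOn_of_tendsto [NeBot (𝓝[s] l)] (ha : Tendsto f (𝓝[s] l) (𝓝 a))
    (hx : x ∈ s) : edist a (f x) ≤ eVariationOn f s :=
  le_of_tendsto (ha.edist tendsto_const_nhds)
    (eventually_mem_nhdsWithin.mono fun _ hy => eVariationOn.edist_le f hy hx)

variable [OrderTopology α]

theorem exists_tendsto_nhdsWithin_Ioo [CompleteSpace E]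
    (hf : BoundedVariationOn f (Ioo l u)) :
    ∃ a b, Tendsto f (𝓝[Ioo l u] l) (𝓝 a) ∧ Tendsto f (𝓝[Ioo l u] u) (𝓝 b) := by
  obtain ⟨a, ha⟩ := hf.exists_tendsto_right l
  obtain ⟨b, hb⟩ := hf.exists_tendsto_left u
  rw [inter_eq_left.2 Ioo_subset_Ioi_self] at ha
  rw [inter_eq_left.2 Ioo_subset_Iio_self] at hb
  exact ⟨a, b, ha, hb⟩

variable [DenselyOrdered α]

theorem edist_add_edist_add_edist_le_eVariationOn_Ioo
    (ha : Tendsto f (𝓝[Ioo l u] l) (𝓝 a)) (hb : Tendsto f (𝓝[Ioo l u] u) (𝓝 b))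
    (hlx : l < x) (hxy : x ≤ y) (hyu : y < u) :
    edist a (f x) + edist (f x) (f y) + edist (f y) b ≤ eVariationOn f (Ioo l u) := by
  have hIoc : Ioc l x ⊆ Ioo l u := fun _ hz => ⟨hz.1, hz.2.trans_lt (hxy.trans_lt hyu)⟩
  have hIco : Ico y u ⊆ Ioo l u := fun _ hz => ⟨hlx.trans_le (hxy.trans hz.1), hz.2⟩
  have := left_nhdsWithin_Ioc_neBot hlx
  have := right_nhdsWithin_Ico_neBot hyu
  calc edist a (f x) + edist (f x) (f y) + edist (f y) b
      ≤ eVariationOn f (Ioc l x) + eVariationOn f (Icc x y) + eVariationOn f (Ico y u) := by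
        gcongr
        · exact edist_le_eVariationOn_of_tendsto (ha.mono_left (nhdsWithin_mono l hIoc))
            (right_mem_Ioc.2 hlx)
        · exact eVariationOn.edist_le f (left_mem_Icc.2 hxy) (right_mem_Icc.2 hxy)
        · rw [edist_comm]
          exact edist_le_eVariationOn_of_tendsto (hb.mono_left (nhdsWithin_mono u hIco))
            (left_mem_Ico.2 hyu)
    _ = eVariationOn f (Ioo l u) := by
        rw [← eVariationOn.union f (isGreatest_Ioc hlx) (isLeast_Icc hxy),
          Ioc_union_Icc_eq_Ioc hlx hxy,
          ← eVariationOn.union f (isGreatest_Ioc (hlx.trans_le hxy)) (isLeast_Ico hyu),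
          Ioc_union_Ico_eq_Ioo (hlx.trans_le hxy) hyu]

theorem eVariationOn_Icc_eq_edist_add_eVariationOn_Ioo_add_edist (hlu : l < u)
    (ha : Tendsto f (𝓝[Ioo l u] l) (𝓝 a)) (hb : Tendsto f (𝓝[Ioo l u] u) (𝓝 b)) :
    eVariationOn f (Icc l u) = edist (f l) a + eVariationOn f (Ioo l u) + edist (f u) b := by
  have hIoo : Ico l u ∩ Ioi l = Ioo l u := by grind
  have hIco : Ico l u ∩ Ici l = Ico l u := by grind
  have hIco' : Icc l u ∩ Iio u = Ico l u := by grind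
  have hIcc : Icc l u ∩ Iic u = Icc l u := by grind
  have hleft := eVariationOn.eVariationOn_on_inter_Ici_eq_Ioi_add_edist (s := Ico l u) (f := f)
    (by rw [hIoo]; exact left_nhdsWithin_Ioo_neBot hlu) (left_mem_Ico.2 hlu) (by rwa [hIoo])
  have hb' : Tendsto f (𝓝[Ico l u] u) (𝓝 b) := by
    rwa [nhdsWithin_Ico_eq_nhdsLT hlu, ← nhdsWithin_Ioo_eq_nhdsLT hlu]
  have hright := eVariationOn.eVariationOn_on_inter_Iic_eq_Iio_add_edist (s := Icc l u) (f := f)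
    (by rw [hIco']; exact right_nhdsWithin_Ico_neBot hlu) (right_mem_Icc.2 hlu.le)
    (by rwa [hIco'])
  rw [hIoo, hIco] at hleft
  rw [hIco', hIcc] at hright
  rw [hright, hleft, add_comm (edist (f l) a)]

end Variation

section IndicatorVariation

variable {α : Type*} [LinearOrder α] {f : α → ℝ} {l u p q m : α} {c : ℝ}

theorem eVariationOn_Icc_eq_of_monotoneOn (hf : MonotoneOn f (Icc l u)) (hlu : l ≤ u) :
    eVariationOn f (Icc l u) = ENNReal.ofReal (f u - f l) := by
  simpa using hf.eVariationOn_eq (left_mem_Icc.2 hlu) (right_mem_Icc.2 hlu)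

theorem eVariationOn_Icc_eq_of_antitoneOn (hf : AntitoneOn f (Icc l u)) (hlu : l ≤ u) :
    eVariationOn f (Icc l u) = ENNReal.ofReal (f l - f u) := by
  have hneg : eVariationOn (fun x => -f x) (Icc l u) = eVariationOn f (Icc l u) := by
    simp only [eVariationOn, edist_neg_neg]
  rw [← hneg, eVariationOn_Icc_eq_of_monotoneOn hf.neg hlu, neg_sub_neg]

theorem monotoneOn_indicator_Ioo_const (hc : 0 ≤ c) (hm : m < q) :
    MonotoneOn ((Ioo p q).indicator fun _ => c) (Iic m) := by
  intro x _ y hy hxy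
  simp only [indicator_apply, mem_Ioo]
  grind

theorem antitoneOn_indicator_Ioo_const (hc : 0 ≤ c) (hm : p < m) :
    AntitoneOn ((Ioo p q).indicator fun _ => c) (Ici m) := by
  intro x hx y _ hxy
  simp only [indicator_apply, mem_Ioo]
  grind

theorem eVariationOn_indicator_Ioo_const [DenselyOrdered α] (hc : 0 ≤ c) (hlp : l ≤ p)
    (hpq : p < q) (hqu : q ≤ u) :
    eVariationOn ((Ioo p q).indicator fun _ => c) (Icc l u) = ENNReal.ofReal (2 * c) := by
  obtain ⟨m, hpm, hmq⟩ := exists_between hpq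
  have hlm : l ≤ m := hlp.trans hpm.le
  have hmu : m ≤ u := hmq.le.trans hqu
  rw [← Icc_union_Icc_eq_Icc hlm hmu,
    eVariationOn.union _ (isGreatest_Icc hlm) (isLeast_Icc hmu),
    eVariationOn_Icc_eq_of_monotoneOn ((monotoneOn_indicator_Ioo_const hc hmq).mono
      Icc_subset_Iic_self) hlm,
    eVariationOn_Icc_eq_of_antitoneOn ((antitoneOn_indicator_Ioo_const hc hpm).mono
      Icc_subset_Ici_self) hmu,
    indicator_of_mem (show m ∈ Ioo p q from ⟨hpm, hmq⟩),
    indicator_of_notMem (fun h => h.1.not_ge hlp), indicator_of_notMem (fun h => h.2.not_ge hqu),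
    sub_zero, ← ENNReal.ofReal_add hc hc, two_mul]

theorem boundedVariationOn_indicator_Ioo_const [DenselyOrdered α] (hc : 0 ≤ c) (hlp : l ≤ p)
    (hpq : p < q) (hqu : q ≤ u) :
    BoundedVariationOn ((Ioo p q).indicator fun _ => c) (Icc l u) := by
  rw [BoundedVariationOn, eVariationOn_indicator_Ioo_const hc hlp hpq hqu]
  exact ENNReal.ofReal_ne_top

end IndicatorVariation

section Measure

variable {α : Type*} [MeasurableSpace α] {μ : Measure α} {s t : Set α}

theorem measureReal_symmDiff_eq_add_sub (hs : MeasurableSet s) (ht : MeasurableSet t)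
    (hμs : μ s ≠ ⊤) (hμt : μ t ≠ ⊤) :
    μ.real (s ∆ t) = μ.real s + μ.real t - 2 * μ.real (s ∩ t) := by
  have hst := measureReal_inter_add_sdiff ht hμs
  have hts := measureReal_inter_add_sdiff hs hμt
  rw [inter_comm] at hts
  rw [measureReal_symmDiff_eq hs ht]
  linarith

theorem setIntegral_le_mul_measureReal {f : α → ℝ} {c : ℝ} (hs : MeasurableSet s)
    (hμs : μ s ≠ ⊤) (hf : IntegrableOn f s μ) (hts : t ⊆ s) (hc : 0 ≤ c)
    (hft : ∀ x ∈ t, f x ≤ c) (hfst : ∀ x ∈ s \ t, f x ≤ 0) :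
    ∫ x in s, f x ∂μ ≤ c * μ.real t := by
  -- `t` need not be measurable; enlarging it to a measurable hull costs nothing as `0 ≤ c`.
  set t' := toMeasurable μ t
  have ht' : MeasurableSet t' := measurableSet_toMeasurable μ t
  have hμt : μ t ≠ ⊤ := measure_ne_top_of_subset hts hμs
  have hμt' : μ t' = μ t := measure_toMeasurable t
  calc ∫ x in s, f x ∂μ ≤ ∫ x in s, t'.indicator (fun _ => c) x ∂μ := by
        refine setIntegral_mono_on hf ((integrableOn_const hμs).indicator ht') hs fun x hx => ?_
        by_cases hxt : x ∈ t
        · rw [indicator_of_mem (subset_toMeasurable μ t hxt)]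
          exact hft x hxt
        · exact (hfst x ⟨hx, hxt⟩).trans (indicator_nonneg (fun _ _ => hc) x)
    _ = c * μ.real (s ∩ t') := by
        rw [setIntegral_indicator ht', setIntegral_const, smul_eq_mul, mul_comm]
    _ ≤ c * μ.real t' := by
        gcongr
        · rwa [hμt']
        · exact inter_subset_right
    _ = c * μ.real t := by rw [Measure.real, Measure.real, hμt']

end Measure

section BoundaryTerm

variable {τ a b : ℝ}

/-- The part of `[0, 1]` covered by `[-τ, a - τ]` and its translate by `1`: the arc `[0, a]` of the
circle `ℝ / ℤ` rotated by `-τ`. -/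
def rotatedArc (τ a : ℝ) : Set ℝ :=
  Icc 0 1 ∩ (Icc (-τ) (a - τ) ∪ Icc (1 - τ) (a + 1 - τ))

theorem measurableSet_rotatedArc : MeasurableSet (rotatedArc τ a) :=
  measurableSet_Icc.inter (measurableSet_Icc.union measurableSet_Icc)

theorem volume_rotatedArc_ne_top : volume (rotatedArc τ a) ≠ ⊤ :=
  measure_ne_top_of_subset inter_subset_left measure_Icc_lt_top.ne

theorem volume_real_rotatedArc (hτ : τ ∈ Icc (0 : ℝ) 1) (ha : a ∈ Icc (0 : ℝ) 1) :
    volume.real (rotatedArc τ a) = a := by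
  obtain ⟨hτ0, hτ1⟩ := hτ
  obtain ⟨ha0, ha1⟩ := ha
  have harc : rotatedArc τ a = Icc 0 (a - τ) ∪ Icc (1 - τ) (min 1 (a + 1 - τ)) := by
    ext x
    simp only [rotatedArc, mem_inter_iff, mem_union, mem_Icc, le_min_iff]
    grind
  have hdisj : AEDisjoint volume (Icc 0 (a - τ)) (Icc (1 - τ) (min 1 (a + 1 - τ))) := by
    refine measure_mono_null (t := {a - τ}) ?_ Real.volume_singleton
    intro x ⟨hx, hx'⟩
    exact le_antisymm hx.2 (by linarith [hx'.1])
  rw [harc, measureReal_union₀ measurableSet_Icc.nullMeasurableSet hdisj measure_Icc_lt_top.ne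
    measure_Icc_lt_top.ne, Real.volume_real_Icc, Real.volume_real_Icc]
  grind

theorem phi_eq_volume_real_symmDiff (hb : b ≤ 1) :
    phi τ a b = volume.real (rotatedArc τ a ∆ Icc 0 b) := by
  have hIcc : Icc 0 b = Icc 0 1 ∩ Icc 0 b :=
    (inter_eq_right.2 (Icc_subset_Icc_right hb)).symm
  rw [phi, inter_symmDiff_distrib_left, ← hIcc]
  rfl

theorem phi_eq_add_sub_two_mul_overlap (hτ : τ ∈ Icc (0 : ℝ) 1) (ha : a ∈ Icc (0 : ℝ) 1)
    (hb : b ∈ Icc (0 : ℝ) 1) :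
    phi τ a b = a + b - 2 * volume.real (rotatedArc τ a ∩ Icc 0 b) := by
  rw [phi_eq_volume_real_symmDiff hb.2, measureReal_symmDiff_eq_add_sub measurableSet_rotatedArc
    measurableSet_Icc volume_rotatedArc_ne_top measure_Icc_lt_top.ne, volume_real_rotatedArc hτ ha,
    Real.volume_real_Icc_of_le hb.1, sub_zero]

theorem phi_le_add (hτ : τ ∈ Icc (0 : ℝ) 1) (ha : a ∈ Icc (0 : ℝ) 1) (hb : b ∈ Icc (0 : ℝ) 1) :
    phi τ a b ≤ a + b := by
  rw [phi_eq_add_sub_two_mul_overlap hτ ha hb]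
  linarith [measureReal_nonneg (μ := volume) (s := rotatedArc τ a ∩ Icc 0 b)]

theorem abs_sub_le_phi (hτ : τ ∈ Icc (0 : ℝ) 1) (ha : a ∈ Icc (0 : ℝ) 1)
    (hb : b ∈ Icc (0 : ℝ) 1) : |a - b| ≤ phi τ a b := by
  have h := abs_measureReal_sub_le_measureReal_symmDiff' (μ := volume)
    (measurableSet_rotatedArc (τ := τ) (a := a)).nullMeasurableSet
    (measurableSet_Icc (a := 0) (b := b)).nullMeasurableSet volume_rotatedArc_ne_top
    measure_Icc_lt_top.ne
  rwa [volume_real_rotatedArc hτ ha, Real.volume_real_Icc_of_le hb.1, sub_zero,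
    ← phi_eq_volume_real_symmDiff hb.2] at h

theorem volume_real_rotatedArc_inter_Icc_le :
    volume.real (rotatedArc τ a ∩ Icc 0 b) ≤ max (a - τ) 0 + max (b - (1 - τ)) 0 := by
  have hsub : rotatedArc τ a ∩ Icc 0 b ⊆ Icc 0 (a - τ) ∪ Icc (1 - τ) b := by
    rintro x ⟨⟨hx, hx' | hx'⟩, hxb⟩
    · exact Or.inl ⟨hx.1, hx'.2⟩
    · exact Or.inr ⟨hx'.1, hxb.2⟩
  calc volume.real (rotatedArc τ a ∩ Icc 0 b)
      ≤ volume.real (Icc 0 (a - τ) ∪ Icc (1 - τ) b) := measureReal_mono hsub (by simp)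
    _ ≤ volume.real (Icc 0 (a - τ)) + volume.real (Icc (1 - τ) b) := measureReal_union_le _ _
    _ = max (a - τ) 0 + max (b - (1 - τ)) 0 := by
        rw [Real.volume_real_Icc, Real.volume_real_Icc, sub_zero]

end BoundaryTerm

section LowerBound

/-- The set `{0 < v < 1}` whose measure is penalised in `Fvol`. -/
def transitionSet (L : ℝ) (v : ℝ → ℝ) : Set ℝ :=
  {x ∈ Ioo 0 L | 0 < v x ∧ v x < 1}

/-- The variation of `v` on `(0, L)` plus the boundary term, i.e. the total cost of the jumps when
the two end states `a = v(0⁺)` and `b = v(L⁻)` are joined periodically. -/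
def periodicVariation (L τ : ℝ) (v : ℝ → ℝ) (a b : ℝ) : ℝ :=
  (eVariationOn v (Ioo 0 L)).toReal + phi τ a b

theorem fvol_add_phi (L τ : ℝ) (v : ℝ → ℝ) (a b : ℝ) :
    Fvol L v + phi τ a b =
      2 * volume.real (transitionSet L v) + periodicVariation L τ v a b := by
  rw [periodicVariation, ← add_assoc]
  rfl

theorem transitionSet_subset (L : ℝ) (v : ℝ → ℝ) : transitionSet L v ⊆ Ioo 0 L :=
  sep_subset _ _

theorem transitionSet_one_sub (L : ℝ) (v : ℝ → ℝ) :
    transitionSet L (fun x => 1 - v x) = transitionSet L v := by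
  ext x
  simp only [transitionSet, mem_sep_iff, sub_pos, sub_lt_self_iff]
  tauto

variable {L τ σ a b c x y : ℝ} {v : ℝ → ℝ}

theorem setIntegral_le_mul_volume_transitionSet (hv : IntegrableOn v (Ioo 0 L)) (hc : 0 ≤ c)
    (hvc : ∀ x ∈ Ioo 0 L, v x ≤ c) (hv1 : ∀ x ∈ Ioo 0 L, v x < 1) :
    ∫ x in Ioo 0 L, v x ≤ c * volume.real (transitionSet L v) :=
  setIntegral_le_mul_measureReal measurableSet_Ioo measure_Ioo_lt_top.ne hv
    (transitionSet_subset L v) hc (fun x hx => hvc x hx.1)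
    fun x hx => not_lt.1 fun h => hx.2 ⟨hx.1, h, hv1 x hx.1⟩

theorem sub_setIntegral_le_mul_volume_transitionSet (hL : 0 ≤ L) (hv : IntegrableOn v (Ioo 0 L))
    (hc : 0 ≤ c) (hvc : ∀ x ∈ Ioo 0 L, 1 - c ≤ v x) (hv0 : ∀ x ∈ Ioo 0 L, 0 < v x) :
    L - ∫ x in Ioo 0 L, v x ≤ c * volume.real (transitionSet L v) := by
  have hone : IntegrableOn (fun _ => (1 : ℝ)) (Ioo 0 L) := integrableOn_const measure_Ioo_lt_top.ne
  have h := setIntegral_le_mul_volume_transitionSet (v := fun x => 1 - v x) (hone.sub hv) hc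
    (fun x hx => sub_le_comm.1 (hvc x hx)) fun x hx => sub_lt_self 1 (hv0 x hx)
  rwa [transitionSet_one_sub, integral_sub hone hv, setIntegral_const,
    Real.volume_real_Ioo_of_le hL, sub_zero, smul_eq_mul, mul_one] at h

theorem mem_Icc_of_tendsto_nhdsWithin_Ioo {p : ℝ} [NeBot (𝓝[Ioo 0 L] p)]
    (hv : ∀ x ∈ Ioo 0 L, v x ∈ Icc (0 : ℝ) 1) (ha : Tendsto v (𝓝[Ioo 0 L] p) (𝓝 a)) :
    a ∈ Icc (0 : ℝ) 1 :=
  isClosed_Icc.mem_of_tendsto ha (eventually_mem_nhdsWithin.mono hv)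

theorem abs_add_abs_add_abs_le_toReal_eVariationOn (hbv : BoundedVariationOn v (Ioo 0 L))
    (ha : Tendsto v (𝓝[Ioo 0 L] 0) (𝓝 a)) (hb : Tendsto v (𝓝[Ioo 0 L] L) (𝓝 b))
    (hx : 0 < x) (hxy : x ≤ y) (hy : y < L) :
    |a - v x| + |v x - v y| + |v y - b| ≤ (eVariationOn v (Ioo 0 L)).toReal := by
  have h := ENNReal.toReal_mono hbv
    (edist_add_edist_add_edist_le_eVariationOn_Ioo ha hb hx hxy hy)
  rwa [ENNReal.toReal_add (by finiteness) (by finiteness),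
    ENNReal.toReal_add (by finiteness) (by finiteness), ← dist_edist, ← dist_edist,
    ← dist_edist] at h

theorem two_mul_sub_le_periodicVariation (hL : 0 < L) (hτ : τ ∈ Icc (0 : ℝ) 1)
    (hv : ∀ x ∈ Ioo 0 L, v x ∈ Icc (0 : ℝ) 1) (hbv : BoundedVariationOn v (Ioo 0 L))
    (ha : Tendsto v (𝓝[Ioo 0 L] 0) (𝓝 a)) (hb : Tendsto v (𝓝[Ioo 0 L] L) (𝓝 b))
    (hx : x ∈ Ioo 0 L) (hy : y ∈ Ioo 0 L) :
    2 * (v y - v x) ≤ periodicVariation L τ v a b := by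
  have := left_nhdsWithin_Ioo_neBot hL
  have := right_nhdsWithin_Ioo_neBot hL
  have hφ := abs_sub_le_phi hτ (mem_Icc_of_tendsto_nhdsWithin_Ioo hv ha)
    (mem_Icc_of_tendsto_nhdsWithin_Ioo hv hb)
  rw [periodicVariation]
  rcases le_total x y with hxy | hyx
  · have hV := abs_add_abs_add_abs_le_toReal_eVariationOn hbv ha hb hx.1 hxy hy.2
    grind
  · have hV := abs_add_abs_add_abs_le_toReal_eVariationOn hbv ha hb hy.1 hyx hx.2
    grind

theorem min_le_half_periodicVariation_or_forall_le_or_forall_ge (hL : 0 < L)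
    (hτ : τ ∈ Icc (0 : ℝ) 1) (hv : ∀ x ∈ Ioo 0 L, v x ∈ Icc (0 : ℝ) 1)
    (hbv : BoundedVariationOn v (Ioo 0 L))
    (ha : Tendsto v (𝓝[Ioo 0 L] 0) (𝓝 a)) (hb : Tendsto v (𝓝[Ioo 0 L] L) (𝓝 b)) :
    min τ (1 - τ) ≤ periodicVariation L τ v a b / 2 ∨
      (∀ x ∈ Ioo 0 L, v x ≤ periodicVariation L τ v a b / 2) ∨
      ∀ x ∈ Ioo 0 L, 1 - periodicVariation L τ v a b / 2 ≤ v x := by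
  have := left_nhdsWithin_Ioo_neBot hL
  have := right_nhdsWithin_Ioo_neBot hL
  set q := periodicVariation L τ v a b / 2 with hq
  set ω := volume.real (rotatedArc τ a ∩ Icc 0 b)
  have hω : ω ≤ max (a - τ) 0 + max (b - (1 - τ)) 0 := volume_real_rotatedArc_inter_Icc_le
  rw [periodicVariation, phi_eq_add_sub_two_mul_overlap hτ
    (mem_Icc_of_tendsto_nhdsWithin_Ioo hv ha) (mem_Icc_of_tendsto_nhdsWithin_Ioo hv hb)] at hq
  have hV : ∀ x ∈ Ioo 0 L, |a - v x| + |v x - b| ≤ (eVariationOn v (Ioo 0 L)).toReal :=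
    fun x hx => by simpa using abs_add_abs_add_abs_le_toReal_eVariationOn hbv ha hb hx.1 le_rfl hx.2
  have hupper : ∀ x ∈ Ioo 0 L, v x ≤ q + ω := fun x hx => by grind [hV x hx]
  have hlower : ∀ x ∈ Ioo 0 L, a + b - ω - q ≤ v x := fun x hx => by grind [hV x hx]
  obtain ⟨z, hz⟩ := nonempty_Ioo.2 hL
  have hends : a ≤ q + ω ∧ b ≤ q + ω := by grind [hV z hz]
  rcases le_total a τ with haτ | haτ <;> rcases le_total b (1 - τ) with hbτ | hbτ
  · exact Or.inr (Or.inl fun x hx => by grind [hupper x hx])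
  · exact Or.inl (by grind)
  · exact Or.inl (by grind)
  · exact Or.inr (Or.inr fun x hx => by grind [hlower x hx])

theorem setIntegral_le_or_sub_setIntegral_le_or_one_le_or_add_min_le (hL : 0 < L)
    (hτ : τ ∈ Icc (0 : ℝ) 1) (hv : ∀ x ∈ Ioo 0 L, v x ∈ Icc (0 : ℝ) 1)
    (hint : IntegrableOn v (Ioo 0 L)) (hbv : BoundedVariationOn v (Ioo 0 L))
    (ha : Tendsto v (𝓝[Ioo 0 L] 0) (𝓝 a)) (hb : Tendsto v (𝓝[Ioo 0 L] L) (𝓝 b)) :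
    ∫ x in Ioo 0 L, v x ≤ periodicVariation L τ v a b / 2 * volume.real (transitionSet L v) ∨
      L - ∫ x in Ioo 0 L, v x ≤
        periodicVariation L τ v a b / 2 * volume.real (transitionSet L v) ∨
      1 ≤ periodicVariation L τ v a b / 2 ∨
      L + min τ (1 - τ) ≤ volume.real (transitionSet L v) + periodicVariation L τ v a b / 2 := by
  set q := periodicVariation L τ v a b / 2 with hq
  have hosc : ∀ x ∈ Ioo 0 L, ∀ y ∈ Ioo 0 L, v y - v x ≤ q := fun x hx y hy => by
    linarith [two_mul_sub_le_periodicVariation hL hτ hv hbv ha hb hx hy]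
  have hq0 : 0 ≤ q := by
    obtain ⟨z, hz⟩ := nonempty_Ioo.2 hL
    simpa using hosc z hz z hz
  have hupper (hlt : ∀ x ∈ Ioo 0 L, v x < 1) (hle : ∀ x ∈ Ioo 0 L, v x ≤ q) :=
    setIntegral_le_mul_volume_transitionSet hint hq0 hle hlt
  have hlower (hpos : ∀ x ∈ Ioo 0 L, 0 < v x) (hge : ∀ x ∈ Ioo 0 L, 1 - q ≤ v x) :=
    sub_setIntegral_le_mul_volume_transitionSet hL.le hint hq0 hge hpos
  by_cases h0 : ∃ x ∈ Ioo 0 L, v x = 0 <;> by_cases h1 : ∃ x ∈ Ioo 0 L, v x = 1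
  · obtain ⟨⟨x, hx, hvx⟩, y, hy, hvy⟩ := And.intro h0 h1
    exact Or.inr (Or.inr (Or.inl (by linarith [hosc x hx y hy])))
  · obtain ⟨x, hx, hvx⟩ := h0
    push Not at h1
    exact Or.inl (hupper (fun y hy => (hv y hy).2.lt_of_ne (h1 y hy))
      fun y hy => by linarith [hosc x hx y hy])
  · obtain ⟨y, hy, hvy⟩ := h1
    push Not at h0
    exact Or.inr (Or.inl (hlower (fun x hx => (hv x hx).1.lt_of_ne' (h0 x hx))
      fun x hx => by linarith [hosc x hx y hy]))
  · push Not at h0 h1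
    have hpos : ∀ x ∈ Ioo 0 L, 0 < v x := fun x hx => (hv x hx).1.lt_of_ne' (h0 x hx)
    have hlt : ∀ x ∈ Ioo 0 L, v x < 1 := fun x hx => (hv x hx).2.lt_of_ne (h1 x hx)
    rcases min_le_half_periodicVariation_or_forall_le_or_forall_ge hL hτ hv hbv ha hb with
      hmin | hle | hge
    · have htransition : transitionSet L v = Ioo 0 L :=
        (transitionSet_subset L v).antisymm fun x hx => ⟨hx, hpos x hx, hlt x hx⟩
      rw [htransition, Real.volume_real_Ioo_of_le hL.le, sub_zero]
      exact Or.inr (Or.inr (Or.inr (by linarith)))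
    · exact Or.inl (hupper hlt hle)
    · exact Or.inr (Or.inl (hlower hpos hge))

theorem four_mul_sqrt_le_fvol_add_phi (hL : 0 < L) (hτ : τ ∈ Icc (0 : ℝ) 1) (hσ0 : 0 < σ)
    (hσ : σ ≤ 1 / 2) (hσL : 2 * √(σ * L) ≤ min 1 (L + min τ (1 - τ))) (hv : Adm L σ v)
    (ha : Tendsto v (𝓝[Ioo 0 L] 0) (𝓝 a)) (hb : Tendsto v (𝓝[Ioo 0 L] L) (𝓝 b)) :
    4 * √(σ * L) ≤ Fvol L v + phi τ a b := by
  obtain ⟨hv01, hbv, hmass⟩ := hv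
  have hint : IntegrableOn v (Ioo 0 L) :=
    Integrable.of_integral_ne_zero (hmass.trans_ne (mul_pos hσ0 hL).ne')
  obtain ⟨z, hz⟩ := nonempty_Ioo.2 hL
  have hP : 0 ≤ periodicVariation L τ v a b := by
    simpa using two_mul_sub_le_periodicVariation hL hτ hv01 hbv ha hb hz hz
  obtain ⟨hσL1, hσLt⟩ := le_min_iff.1 hσL
  rw [fvol_add_phi]
  set m := volume.real (transitionSet L v)
  set q := periodicVariation L τ v a b / 2 with hq
  have hm : 0 ≤ m := measureReal_nonneg
  have hq0 : 0 ≤ q := by positivity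
  have hamgm (h : σ * L ≤ q * m) : 2 * √(σ * L) ≤ q + m :=
    two_mul_le_add_of_sq_le_mul hq0 hm ((Real.sq_sqrt (by positivity)).trans_le h)
  suffices 2 * √(σ * L) ≤ q + m by linarith
  rcases setIntegral_le_or_sub_setIntegral_le_or_one_le_or_add_min_le hL hτ hv01 hint hbv ha hb
    with hle | hle | hone | hadd
  · exact hamgm (hmass.symm.trans_le hle)
  · have hhalf : σ * L ≤ L - σ * L := by nlinarith
    rw [hmass] at hle
    exact hamgm (hhalf.trans hle)
  · linarith
  · linarith

end LowerBound

section Attainment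

variable {L τ σ a b c p q : ℝ}

theorem transitionSet_indicator_const_subset {s : Set ℝ} :
    transitionSet L (s.indicator fun _ => c) ⊆ s :=
  fun _ hx => mem_of_indicator_ne_zero hx.2.1.ne'

theorem indicator_const_mem_Icc_zero_one {s : Set ℝ} (hc : c ∈ Icc (0 : ℝ) 1) (x : ℝ) :
    s.indicator (fun _ => c) x ∈ Icc (0 : ℝ) 1 :=
  ⟨indicator_nonneg (fun _ _ => hc.1) x,
    indicator_le' (fun _ _ => hc.2) (fun _ _ => zero_le_one) x⟩

theorem adm_indicator_Ioo_const (hc : c ∈ Icc (0 : ℝ) 1) (hp : 0 ≤ p) (hpq : p < q) (hq : q ≤ L)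
    (hmass : c * (q - p) = σ * L) : Adm L σ ((Ioo p q).indicator fun _ => c) := by
  refine ⟨fun x _ => indicator_const_mem_Icc_zero_one hc x,
    (boundedVariationOn_indicator_Ioo_const hc.1 hp hpq hq).mono Ioo_subset_Icc_self, ?_⟩
  rw [setIntegral_indicator measurableSet_Ioo, inter_eq_right.2 (Ioo_subset_Ioo hp hq),
    setIntegral_const, Real.volume_real_Ioo_of_le hpq.le, smul_eq_mul, mul_comm, hmass]

theorem add_toReal_eVariationOn_indicator_Ioo_const_add (hc : 0 ≤ c) (hp : 0 ≤ p) (hpq : p < q)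
    (hq : q ≤ L) (ha0 : 0 ≤ a) (hb0 : 0 ≤ b)
    (ha : Tendsto ((Ioo p q).indicator fun _ => c) (𝓝[Ioo 0 L] 0) (𝓝 a))
    (hb : Tendsto ((Ioo p q).indicator fun _ => c) (𝓝[Ioo 0 L] L) (𝓝 b)) :
    a + (eVariationOn ((Ioo p q).indicator fun _ => c) (Ioo 0 L)).toReal + b = 2 * c := by
  have h := eVariationOn_Icc_eq_edist_add_eVariationOn_Ioo_add_edist
    (hp.trans_lt (hpq.trans_le hq)) ha hb
  have hbv := (boundedVariationOn_indicator_Ioo_const hc hp hpq hq).mono Ioo_subset_Icc_self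
  rw [eVariationOn_indicator_Ioo_const hc hp hpq hq, indicator_of_notMem (fun h => h.1.not_ge hp),
    indicator_of_notMem (fun h => h.2.not_ge hq)] at h
  have h' := congrArg ENNReal.toReal h
  rw [ENNReal.toReal_ofReal (by positivity), ENNReal.toReal_add (by finiteness) (by finiteness),
    ENNReal.toReal_add (by finiteness) (by finiteness), ← dist_edist, ← dist_edist,
    dist_zero_left, dist_zero_left, Real.norm_of_nonneg ha0, Real.norm_of_nonneg hb0] at h'
  exact h'.symm

theorem fvol_add_phi_indicator_Ioo_const_le (hτ : τ ∈ Icc (0 : ℝ) 1) (hc : c ∈ Icc (0 : ℝ) 1)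
    (hp : 0 ≤ p) (hpq : p < q) (hq : q ≤ L)
    (ha : Tendsto ((Ioo p q).indicator fun _ => c) (𝓝[Ioo 0 L] 0) (𝓝 a))
    (hb : Tendsto ((Ioo p q).indicator fun _ => c) (𝓝[Ioo 0 L] L) (𝓝 b)) :
    Fvol L ((Ioo p q).indicator fun _ => c) + phi τ a b ≤ 2 * (q - p) + 2 * c := by
  have hL : 0 < L := hp.trans_lt (hpq.trans_le hq)
  have := left_nhdsWithin_Ioo_neBot hL
  have := right_nhdsWithin_Ioo_neBot hL
  have hw : ∀ x ∈ Ioo 0 L, (Ioo p q).indicator (fun _ => c) x ∈ Icc (0 : ℝ) 1 :=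
    fun x _ => indicator_const_mem_Icc_zero_one hc x
  have ha01 := mem_Icc_of_tendsto_nhdsWithin_Ioo hw ha
  have hb01 := mem_Icc_of_tendsto_nhdsWithin_Ioo hw hb
  have hm : volume.real (transitionSet L ((Ioo p q).indicator fun _ => c)) ≤ q - p :=
    (measureReal_mono transitionSet_indicator_const_subset measure_Ioo_lt_top.ne).trans_eq
      (Real.volume_real_Ioo_of_le hpq.le)
  have hvar := add_toReal_eVariationOn_indicator_Ioo_const_add hc.1 hp hpq hq ha01.1 hb01.1 ha hb
  rw [fvol_add_phi, periodicVariation]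
  linarith [phi_le_add hτ ha01 hb01]

end Attainment

theorem le_half_and_two_mul_sqrt_le_of_lt {σ L t : ℝ} (hL : 0 < L) (htL : t ≤ L)
    (hLt : L + t ≤ 1) (h0 : 0 ≤ L + t) (hσ : σ < (L + t) ^ 2 / (4 * L)) :
    σ ≤ 1 / 2 ∧ 2 * √(σ * L) ≤ min 1 (L + t) := by
  rw [lt_div_iff₀ (by positivity)] at hσ
  have hsqrt : √(σ * L) ≤ (L + t) / 2 := Real.sqrt_le_iff.2 ⟨by positivity, by linarith⟩
  refine ⟨?_, le_min (by linarith) (by linarith)⟩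
  have : 4 * L * σ ≤ 4 * L * (1 / 2) := by nlinarith
  exact le_of_mul_le_mul_left this (by positivity)

theorem periodic_min_intermediate_domain_small_fraction_general (τ σ L : ℝ)
    (hτ : τ ∈ Icc (0 : ℝ) 1) (hL0 : 0 < L) (hσ0 : 0 < σ) (hσ : σ ≤ 1 / 2)
    (hσL : 2 * √(σ * L) ≤ min 1 (L + min τ (1 - τ))) :
    (∀ v : ℝ → ℝ, ∀ a b : ℝ, Adm L σ v →
        Tendsto v (𝓝[Ioo 0 L] 0) (𝓝 a) → Tendsto v (𝓝[Ioo 0 L] L) (𝓝 b) →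
        4 * √(σ * L) ≤ Fvol L v + phi τ a b) ∧
    ∀ s : ℝ, 0 ≤ s → s ≤ L - √(σ * L) →
      Adm L σ ((Ioo s (s + √(σ * L))).indicator fun _ => √(σ * L)) ∧
      ∃ a b : ℝ,
        Tendsto ((Ioo s (s + √(σ * L))).indicator fun _ => √(σ * L)) (𝓝[Ioo 0 L] 0) (𝓝 a) ∧
        Tendsto ((Ioo s (s + √(σ * L))).indicator fun _ => √(σ * L)) (𝓝[Ioo 0 L] L) (𝓝 b) ∧
        Fvol L ((Ioo s (s + √(σ * L))).indicator fun _ => √(σ * L)) + phi τ a b =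
          4 * √(σ * L) := by
  refine ⟨fun v a b => four_mul_sqrt_le_fvol_add_phi hL0 hτ hσ0 hσ hσL, fun s hs hsL => ?_⟩
  set r := √(σ * L) with hr
  have hr0 : 0 < r := by positivity
  have hr1 : r ∈ Icc (0 : ℝ) 1 := ⟨hr0.le, by linarith [hσL.trans (min_le_left _ _)]⟩
  have hsr : s < s + r := lt_add_of_pos_right s hr0
  have hsrL : s + r ≤ L := by linarith
  have hmass : r * (s + r - s) = σ * L := by
    rw [add_sub_cancel_left, hr, Real.mul_self_sqrt (by positivity)]
  have hadm := adm_indicator_Ioo_const hr1 hs hsr hsrL hmass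
  obtain ⟨a, b, ha, hb⟩ := exists_tendsto_nhdsWithin_Ioo hadm.2.1
  refine ⟨hadm, a, b, ha, hb, le_antisymm ?_ ?_⟩
  · linarith [fvol_add_phi_indicator_Ioo_const_le hτ hr1 hs hsr hsrL ha hb]
  · exact four_mul_sqrt_le_fvol_add_phi hL0 hτ hσ0 hσ hσL hadm ha hb

/-- Periodic minimum problem in intermediate-size domains with small volume fraction:
writing `τ_* = min{τ,1−τ}` and `τ^* = max{τ,1−τ}`, for `τ_* ≤ L ≤ τ^*` and
`0 < σ < (L+τ_*)²/(4L)` the least value of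
`E^#_τ(v) = Fvol L v + φ_τ(v(0⁺), v(L⁻))` over `Adm(L,σ)` is `4√(σL)`, attained by
`v = √(σL)·χ_{(s, s+√(σL))}` for any `0 ≤ s ≤ L − √(σL)`. -/
theorem periodic_min_intermediate_domain_small_fraction (τ σ L : ℝ)
    (hτ : τ ∈ Set.Icc (0 : ℝ) 1) (hL0 : 0 < L)
    (hL1 : min τ (1 - τ) ≤ L) (hL2 : L ≤ max τ (1 - τ))
    (hσ1 : 0 < σ) (hσ2 : σ < (L + min τ (1 - τ)) ^ 2 / (4 * L)) :
    (∀ v : ℝ → ℝ, ∀ a b : ℝ, Adm L σ v →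
        Tendsto v (nhdsWithin 0 (Set.Ioo 0 L)) (nhds a) →
        Tendsto v (nhdsWithin L (Set.Ioo 0 L)) (nhds b) →
        4 * Real.sqrt (σ * L) ≤ Fvol L v + phi τ a b) ∧
    (∀ s : ℝ, 0 ≤ s → s ≤ L - Real.sqrt (σ * L) →
      Adm L σ (Set.indicator (Set.Ioo s (s + Real.sqrt (σ * L)))
          (fun _ => Real.sqrt (σ * L))) ∧
      ∃ a b : ℝ,
        Tendsto (Set.indicator (Set.Ioo s (s + Real.sqrt (σ * L)))
            (fun _ => Real.sqrt (σ * L)))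
          (nhdsWithin 0 (Set.Ioo 0 L)) (nhds a) ∧
        Tendsto (Set.indicator (Set.Ioo s (s + Real.sqrt (σ * L)))
            (fun _ => Real.sqrt (σ * L)))
          (nhdsWithin L (Set.Ioo 0 L)) (nhds b) ∧
        Fvol L (Set.indicator (Set.Ioo s (s + Real.sqrt (σ * L)))
            (fun _ => Real.sqrt (σ * L))) + phi τ a b = 4 * Real.sqrt (σ * L)) := by
  have hL : L + min τ (1 - τ) ≤ 1 := by linarith [min_add_max τ (1 - τ)]
  have ht : 0 ≤ min τ (1 - τ) := le_min hτ.1 (sub_nonneg.2 hτ.2)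
  obtain ⟨hσ, hσL⟩ := le_half_and_two_mul_sqrt_le_of_lt hL0 hL1 hL (by positivity) hσ2
  exact periodic_min_intermediate_domain_small_fraction_general τ σ L hτ hL0 hσ1 hσ hσL
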